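/- Assume the diagonal setup with eigenvalue sequence (λ_n) and fix ε > 0, ξ > 0, δ ∈ (0,1), an integer n ≥ 1, and constants K_1 ≥ 0, K_2 ≥ 0. Let x ∈ H, let F : H → H satisfy ‖F(x') − F(y')‖ ≤ K_1‖x' − y'‖ for all x', y' ∈ H, and let B : H → L(H). Let v ∈ H with ‖v‖_V² := ∑_k λ_{k,ε} b_k^{-2}⟨v,e_k⟩² < ∞, and suppose the operator D := B(x) − B(x − v) satisfies Ran(D) ⊆ H_0, B_0^{-1}D is Hilbert–Schmidt, and 2⟨F(x) − F(x − v), B_0^{-2}v⟩ + ‖B_0^{-1}D‖²_{HS} ≤ K_2‖v‖²_{H_0}. Then for every g ∈ H with ‖g‖ ≤ n: −2‖v‖²_V + 2⟨F(x) − F(x − v), B_0^{-2}v⟩ − (2/ξ)‖v‖²_{H_0} + (2/ξ)⟨B_0^{-1}(D g), B_0^{-1}v⟩ + ‖B_0^{-1}D‖²_{HS} ≤ −2(1 − δ²)‖v‖²_V + ( K_2 + (2 n √K_2 − 2)/ξ + 2 n² K_1 ‖B_0‖²/(ε δ² ξ²) ) ‖v‖²_{H_0}. -/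

import Mathlib

/-!
Write `h = ‖v‖_{H₀}`, `N = ‖B₀⁻²v‖`, `β = ‖B₀‖` and `S = ‖B₀⁻¹D‖²_{HS}`. By the monotonicity
hypothesis only the cross term `(2/ξ)⟨B₀⁻¹(D g), B₀⁻¹v⟩ ≤ (2n/ξ) √S h` has to be absorbed
(`h0Sq_apply_le` bounds `‖B₀⁻¹(D g)‖²` by `S ‖g‖²`). The same hypothesis, the Lipschitz bound on `F`
and `‖v‖ ≤ β² N` give `S ≤ K₂ h² + 2 K₁ ‖v‖ N ≤ K₂ h² + 2 K₁ β² N²`, while `ε N² ≤ ‖v‖²_V`.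
Hence `√S ≤ √K₂ h + √(2K₁) β N`, and Young's inequality with weight `δ² ε` splits the product
`h N` into `2 δ² ‖v‖²_V` and a multiple of `h²`.
-/

open scoped RealInnerProductSpace
open Filter

variable {H : Type*} [NormedAddCommGroup H] [InnerProductSpace ℝ H] [CompleteSpace H]

/-- `B₀⁻ᵏ x = ∑ₙ bₙ⁻ᵏ ⟨x, eₙ⟩ eₙ` (as a `tsum`). -/
noncomputable def invPow (e : HilbertBasis ℕ ℝ H) (b : ℕ → ℝ) (k : ℕ) (x : H) : H :=
  ∑' n, (((b n)⁻¹) ^ k * ⟪x, e n⟫) • e n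

/-- `x ∈ Dom(B₀⁻ᵏ)`; for `k = 1` this is `x ∈ H₀`. -/
def memDom (e : HilbertBasis ℕ ℝ H) (b : ℕ → ℝ) (k : ℕ) (x : H) : Prop :=
  Summable (fun n => ((b n)⁻¹) ^ (2 * k) * ⟪x, e n⟫ ^ 2)

/-- `‖z‖²_{H₀} = ‖B₀⁻¹ z‖² = ∑ₙ bₙ⁻² ⟨z, eₙ⟩²`. -/
noncomputable def h0Sq (e : HilbertBasis ℕ ℝ H) (b : ℕ → ℝ) (z : H) : ℝ :=
  ∑' n, ((b n)⁻¹) ^ 2 * ⟪z, e n⟫ ^ 2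

/-- `‖v‖²_V = ∑ₖ (λₖ + ε bₖ⁻²) bₖ⁻² ⟨v, eₖ⟩²`. -/
noncomputable def vSq (e : HilbertBasis ℕ ℝ H) (b l : ℕ → ℝ) (ε : ℝ) (v : H) : ℝ :=
  ∑' k, (l k + ε * ((b k)⁻¹) ^ 2) * ((b k)⁻¹) ^ 2 * ⟪v, e k⟫ ^ 2

/-- Parseval's identity. -/
lemma hasSum_sq_coord (e : HilbertBasis ℕ ℝ H) (x : H) :
    HasSum (fun k => ⟪x, e k⟫ ^ 2) (‖x‖ ^ 2) := by
  have h := e.hasSum_inner_mul_inner x x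
  rw [real_inner_self_eq_norm_sq] at h
  have hf : (fun k => ⟪x, e k⟫ ^ 2) = fun k => ⟪x, e k⟫ * ⟪e k, x⟫ := by
    funext k
    rw [real_inner_comm x (e k), sq]
  rw [hf]
  exact h

lemma inner_invPow (e : HilbertBasis ℕ ℝ H) (b : ℕ → ℝ) (k : ℕ) (x : H)
    (hx : memDom e b k x) (m : ℕ) :
    ⟪invPow e b k x, e m⟫ = ((b m)⁻¹) ^ k * ⟪x, e m⟫ := by
  have hmem : Memℓp (fun m => ((b m)⁻¹) ^ k * ⟪x, e m⟫) 2 := by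
    refine memℓp_gen ?_
    refine hx.congr fun j => ?_
    simp only [ENNReal.toReal_ofNat, Real.rpow_ofNat, Real.norm_eq_abs, sq_abs]
    ring
  set f : lp (fun _ : ℕ => ℝ) 2 := ⟨_, hmem⟩ with hf
  have hsum : invPow e b k x = e.repr.symm f := (e.hasSum_repr_symm f).tsum_eq
  rw [hsum, real_inner_comm, ← e.repr_apply_apply, LinearIsometryEquiv.apply_symm_apply]

lemma hasSum_norm_sq_invPow (e : HilbertBasis ℕ ℝ H) (b : ℕ → ℝ) (k : ℕ) (x : H)
    (hx : memDom e b k x) :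
    HasSum (fun m => ((b m)⁻¹) ^ (2 * k) * ⟪x, e m⟫ ^ 2) (‖invPow e b k x‖ ^ 2) := by
  convert hasSum_sq_coord e (invPow e b k x) using 2 with m
  rw [inner_invPow e b k x hx]
  ring

lemma norm_sq_invPow_one (e : HilbertBasis ℕ ℝ H) (b : ℕ → ℝ) (x : H)
    (hx : memDom e b 1 x) : ‖invPow e b 1 x‖ ^ 2 = h0Sq e b x :=
  (hasSum_norm_sq_invPow e b 1 x hx).tsum_eq.symm

/-- The Hilbert–Schmidt norm dominates the operator norm: `‖B₀⁻¹(D g)‖² ≤ ‖B₀⁻¹D‖²_{HS} ‖g‖²`. It is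
obtained coordinatewise from `⟨D g, eₘ⟩² ≤ ‖g‖² ‖D* eₘ‖²`, then by exchanging the two sums. -/
lemma h0Sq_apply_le (e : HilbertBasis ℕ ℝ H) (b : ℕ → ℝ) (D : H →L[ℝ] H)
    (hRan : ∀ u : H, memDom e b 1 (D u))
    (hHS : Summable (fun k => h0Sq e b (D (e k)))) (g : H) :
    h0Sq e b (D g) ≤ (∑' k, h0Sq e b (D (e k))) * ‖g‖ ^ 2 := by
  have hcol : ∀ k, Summable fun m => ((b m)⁻¹) ^ 2 * ⟪D (e k), e m⟫ ^ 2 := fun k => hRan (e k)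
  have hprod : Summable (Function.uncurry fun k m => ((b m)⁻¹) ^ 2 * ⟪D (e k), e m⟫ ^ 2) := by
    refine (summable_prod_of_nonneg fun p => ?_).2 ⟨hcol, hHS⟩
    simp only [Function.uncurry, Pi.zero_apply]
    positivity
  have hrow : ∀ m, HasSum (fun k => ⟪D (e k), e m⟫ ^ 2)
      (‖ContinuousLinearMap.adjoint D (e m)‖ ^ 2) := fun m => by
    convert hasSum_sq_coord e (ContinuousLinearMap.adjoint D (e m)) using 2 with k
    rw [ContinuousLinearMap.adjoint_inner_left, real_inner_comm]
  have hswap : ∑' k, h0Sq e b (D (e k))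
      = ∑' m, ((b m)⁻¹) ^ 2 * ‖ContinuousLinearMap.adjoint D (e m)‖ ^ 2 := by
    unfold h0Sq
    rw [← hprod.tsum_comm]
    exact tsum_congr fun m => ((hrow m).mul_left _).tsum_eq
  have hsum : Summable fun m => ((b m)⁻¹) ^ 2 * ‖ContinuousLinearMap.adjoint D (e m)‖ ^ 2 := by
    refine hprod.prod_symm.prod.congr fun m => ?_
    exact ((hrow m).mul_left (((b m)⁻¹) ^ 2)).tsum_eq
  rw [hswap, ← tsum_mul_right]
  refine (hRan g).tsum_le_tsum (fun m => ?_) (hsum.mul_right _)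
  have hcs : ⟪D g, e m⟫ ^ 2 ≤ ‖ContinuousLinearMap.adjoint D (e m)‖ ^ 2 * ‖g‖ ^ 2 := by
    rw [← ContinuousLinearMap.adjoint_inner_right, ← mul_pow, mul_comm, ← sq_abs]
    gcongr
    exact abs_real_inner_le_norm _ _
  rw [mul_assoc]
  gcongr

/-- The scalar inequality closing the estimate, with `h = ‖v‖_{H₀}`, `N = ‖B₀⁻²v‖`, `s = √S`. -/
lemma cross_term_le {ε ξ δ n K₁ K₂ β h N s V : ℝ} (hε : 0 < ε) (hξ : 0 < ξ) (hδ : 0 < δ)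
    (hn : 0 ≤ n) (hK₁ : 0 ≤ K₁) (hK₂ : 0 ≤ K₂) (hβ : 0 ≤ β) (hh : 0 ≤ h) (hN : 0 ≤ N)
    (hs : s ^ 2 ≤ K₂ * h ^ 2 + 2 * K₁ * β ^ 2 * N ^ 2) (hV : ε * N ^ 2 ≤ V) :
    2 / ξ * (n * s * h) ≤ 2 * δ ^ 2 * V
      + (2 * n * √K₂ / ξ + 2 * n ^ 2 * K₁ * β ^ 2 / (ε * δ ^ 2 * ξ ^ 2)) * h ^ 2 := by
  have hs' : s ≤ √K₂ * h + √(2 * K₁) * β * N := by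
    refine abs_le_of_sq_le_sq' ?_ (by positivity) |>.2
    have h1 := Real.sq_sqrt hK₂
    have h2 := Real.sq_sqrt (by positivity : 0 ≤ 2 * K₁)
    have h3 : 0 ≤ √K₂ * h * (√(2 * K₁) * β * N) := by positivity
    calc s ^ 2 ≤ √K₂ ^ 2 * h ^ 2 + √(2 * K₁) ^ 2 * β ^ 2 * N ^ 2 := by rw [h1, h2]; exact hs
      _ ≤ _ := by nlinarith
  have hy : 2 / ξ * (n * (√(2 * K₁) * β * N) * h)
      ≤ 2 * δ ^ 2 * (ε * N ^ 2) + 2 * n ^ 2 * K₁ * β ^ 2 / (ε * δ ^ 2 * ξ ^ 2) * h ^ 2 := by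
    have h2 := Real.sq_sqrt (by positivity : 0 ≤ 2 * K₁)
    have he := Real.sq_sqrt hε.le
    have he0 := Real.sqrt_pos.2 hε
    -- Young's inequality `2pq ≤ p² + q²` has room to spare: `p²` is only half of the first term on the right.
    set p := δ * √ε * N with hp
    set q := n * √(2 * K₁) * β * h / (√ε * δ * ξ) with hq
    have e1 : 2 / ξ * (n * (√(2 * K₁) * β * N) * h) = 2 * p * q := by
      rw [hp, hq]; field_simp
    have e2 : δ ^ 2 * (ε * N ^ 2) = p ^ 2 := by
      rw [hp, mul_pow, mul_pow, he]; ring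
    have e3 : 2 * n ^ 2 * K₁ * β ^ 2 / (ε * δ ^ 2 * ξ ^ 2) * h ^ 2 = q ^ 2 := by
      rw [hq, div_pow, mul_pow, mul_pow, mul_pow, mul_pow, mul_pow, he, h2]; ring
    rw [e1, e3, mul_assoc 2 (δ ^ 2), e2]
    nlinarith [sq_nonneg (p - q), sq_nonneg p]
  calc 2 / ξ * (n * s * h) ≤ 2 / ξ * (n * (√K₂ * h + √(2 * K₁) * β * N) * h) := by gcongr
    _ = 2 * n * √K₂ / ξ * h ^ 2 + 2 / ξ * (n * (√(2 * K₁) * β * N) * h) := by ring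
    _ ≤ 2 * n * √K₂ / ξ * h ^ 2 + (2 * δ ^ 2 * (ε * N ^ 2)
        + 2 * n ^ 2 * K₁ * β ^ 2 / (ε * δ ^ 2 * ξ ^ 2) * h ^ 2) := by gcongr
    _ ≤ 2 * n * √K₂ / ξ * h ^ 2 + (2 * δ ^ 2 * V
        + 2 * n ^ 2 * K₁ * β ^ 2 / (ε * δ ^ 2 * ξ ^ 2) * h ^ 2) := by gcongr
    _ = _ := by ring

/-- the coercivity estimate (A2) for the truncated drift `A_{n,ε}` of
Lemma 2.4 of the paper.  With `D = B(x) - B(x - v)` satisfying (H4), `F` `K₁`-Lipschitz,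
`v` of finite `V`-norm, and `g` playing the role of `Gₙ(t,v)` (so `‖g‖ ≤ n`):
`-2‖v‖²_V + 2⟨F(x) - F(x-v), B₀⁻²v⟩ - (2/ξ)‖v‖²_{H₀} + (2/ξ)⟨B₀⁻¹(D g), B₀⁻¹v⟩
  + ‖B₀⁻¹D‖²_{HS}
  ≤ -2(1-δ²)‖v‖²_V + (K₂ + (2n√K₂ - 2)/ξ + 2n²K₁‖B₀‖²/(εδ²ξ²))‖v‖²_{H₀}`. -/
theorem stmt8 (e : HilbertBasis ℕ ℝ H) (b l : ℕ → ℝ)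
    (hb_pos : ∀ k, 0 < b k) (hb_bdd : ∃ C : ℝ, ∀ k, b k ≤ C)
    (hl_nonneg : ∀ k, 0 ≤ l k) (hl_mono : Monotone l)
    (hl_top : Tendsto l atTop atTop)
    (ε ξ δ : ℝ) (hε : 0 < ε) (hξ : 0 < ξ) (hδ : δ ∈ Set.Ioo (0 : ℝ) 1)
    (n : ℕ) (hn : 1 ≤ n)
    (K₁ K₂ : ℝ) (hK₁ : 0 ≤ K₁) (hK₂ : 0 ≤ K₂)
    (x : H) (F : H → H) (hF : ∀ x' y' : H, ‖F x' - F y'‖ ≤ K₁ * ‖x' - y'‖)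
    (B : H → H →L[ℝ] H) (v : H)
    (hvV : Summable (fun k => (l k + ε * ((b k)⁻¹) ^ 2) * ((b k)⁻¹) ^ 2 * ⟪v, e k⟫ ^ 2))
    (hRan : ∀ u : H, memDom e b 1 ((B x - B (x - v)) u))
    (hHS : Summable (fun k => h0Sq e b ((B x - B (x - v)) (e k))))
    (hH4 : 2 * ⟪F x - F (x - v), invPow e b 2 v⟫
        + (∑' k, h0Sq e b ((B x - B (x - v)) (e k))) ≤ K₂ * h0Sq e b v) :
    ∀ g : H, ‖g‖ ≤ (n : ℝ) →
      -2 * vSq e b l ε v + 2 * ⟪F x - F (x - v), invPow e b 2 v⟫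
          - (2 / ξ) * h0Sq e b v
          + (2 / ξ) * ⟪invPow e b 1 ((B x - B (x - v)) g), invPow e b 1 v⟫
          + (∑' k, h0Sq e b ((B x - B (x - v)) (e k)))
        ≤ -2 * (1 - δ ^ 2) * vSq e b l ε v
          + (K₂ + (2 * (n : ℝ) * Real.sqrt K₂ - 2) / ξ
              + 2 * (n : ℝ) ^ 2 * K₁ * (⨆ k, b k) ^ 2 / (ε * δ ^ 2 * ξ ^ 2))
            * h0Sq e b v := by
  intro g hg
  set D := B x - B (x - v) with hD
  set β := ⨆ k, b k with hβdef
  have hbβ : ∀ k, b k ≤ β := fun k =>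
    le_ciSup (by obtain ⟨C, hC⟩ := hb_bdd; exact ⟨C, by rintro _ ⟨k, rfl⟩; exact hC k⟩) k
  have hβ : 0 ≤ β := (hb_pos 0).le.trans (hbβ 0)
  have hone : ∀ k, 1 ≤ β * (b k)⁻¹ := fun k => by
    rw [← div_eq_mul_inv, one_le_div (hb_pos k)]; exact hbβ k
  have hle4 : ∀ k, ε * (((b k)⁻¹) ^ (2 * 2) * ⟪v, e k⟫ ^ 2)
      ≤ (l k + ε * ((b k)⁻¹) ^ 2) * ((b k)⁻¹) ^ 2 * ⟪v, e k⟫ ^ 2 := fun k => by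
    have : 0 ≤ l k * (((b k)⁻¹) ^ 2 * ⟪v, e k⟫ ^ 2) := mul_nonneg (hl_nonneg k) (by positivity)
    linarith
  have hdom2 : memDom e b 2 v := by
    refine (summable_mul_left_iff hε.ne').1 (hvV.of_nonneg_of_le (fun k => ?_) hle4)
    exact mul_nonneg hε.le (mul_nonneg (pow_nonneg (inv_nonneg.2 (hb_pos k).le) _) (sq_nonneg _))
  have hdom1 : memDom e b 1 v := by
    refine (hdom2.mul_left (β ^ 2)).of_nonneg_of_le (fun k =>
      mul_nonneg (pow_nonneg (inv_nonneg.2 (hb_pos k).le) _) (sq_nonneg _)) fun k => ?_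
    have h1 : 1 ≤ (β * (b k)⁻¹) ^ 2 := one_le_pow₀ (hone k)
    calc _ = 1 * (((b k)⁻¹) ^ 2 * ⟪v, e k⟫ ^ 2) := by ring
      _ ≤ (β * (b k)⁻¹) ^ 2 * (((b k)⁻¹) ^ 2 * ⟪v, e k⟫ ^ 2) := by gcongr
      _ = _ := by ring
  set h := ‖invPow e b 1 v‖ with hh
  set N := ‖invPow e b 2 v‖ with hN
  have hN2 := hasSum_norm_sq_invPow e b 2 v hdom2
  have hh2 : h0Sq e b v = h ^ 2 := (norm_sq_invPow_one e b v hdom1).symm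
  have hNV : ε * N ^ 2 ≤ vSq e b l ε v := hasSum_le hle4 (hN2.mul_left ε) hvV.hasSum
  have hvN : ‖v‖ ≤ β ^ 2 * N := by
    refine abs_le_of_sq_le_sq' ?_ (by positivity) |>.2
    rw [mul_pow]
    refine hasSum_le (fun k => ?_) (hasSum_sq_coord e v) (hN2.mul_left ((β ^ 2) ^ 2))
    have h1 : 1 ≤ (β * (b k)⁻¹) ^ 4 := one_le_pow₀ (hone k)
    calc _ = 1 * ⟪v, e k⟫ ^ 2 := by ring
      _ ≤ (β * (b k)⁻¹) ^ 4 * ⟪v, e k⟫ ^ 2 := by gcongr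
      _ = _ := by ring
  set S := ∑' k, h0Sq e b (D (e k)) with hS
  have hS0 : 0 ≤ S := tsum_nonneg fun k => tsum_nonneg fun m => by positivity
  have hFin : -⟪F x - F (x - v), invPow e b 2 v⟫ ≤ K₁ * β ^ 2 * N ^ 2 := by
    have h1 := hF x (x - v)
    rw [sub_sub_cancel] at h1
    calc _ ≤ ‖F x - F (x - v)‖ * N :=
          (neg_le_abs _).trans (abs_real_inner_le_norm _ _)
      _ ≤ (K₁ * (β ^ 2 * N)) * N := by gcongr; exact h1.trans (by gcongr)
      _ = _ := by ring
  have hsS : √S ^ 2 ≤ K₂ * h ^ 2 + 2 * K₁ * β ^ 2 * N ^ 2 := by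
    rw [Real.sq_sqrt hS0, ← hh2]
    linarith
  have hDg : ‖invPow e b 1 (D g)‖ ≤ n * √S := by
    refine abs_le_of_sq_le_sq' ?_ (by positivity) |>.2
    rw [norm_sq_invPow_one e b _ (hRan g), mul_pow, Real.sq_sqrt hS0, mul_comm]
    exact (h0Sq_apply_le e b D hRan hHS g).trans (by gcongr)
  have hcross : 2 / ξ * ⟪invPow e b 1 (D g), invPow e b 1 v⟫ ≤ 2 / ξ * (n * √S * h) := by
    gcongr
    exact (real_inner_le_norm _ _).trans (by gcongr)
  have hfinal := cross_term_le hε hξ hδ.1 (Nat.cast_nonneg n) hK₁ hK₂ hβ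
    (norm_nonneg _) (norm_nonneg _) hsS hNV
  rw [hh2] at hH4 ⊢
  have hsplit : (2 * (n : ℝ) * √K₂ - 2) / ξ = 2 * n * √K₂ / ξ - 2 / ξ := sub_div _ _ _
  rw [hsplit]
  linarith
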